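/- For τ ∈ (0,1) and 0 < ε < (1/2)·min(τ,1-τ), with d₁₀ = (τ+ε)/(τ+(2q-1)ε) and d₀₀ = (1-τ-ε)/(1-τ-(2q-1)ε) at the capacity-achieving q, we have τ·lg d₁₀ + (1-τ)·lg d₀₀ ≥ C_{τ,ε} - 3ε²/(τ(1-τ)) ≥ -5·C_{τ,ε}. -/

import Mathlib

noncomputable def binEntropy (x : ℝ) : ℝ :=
  -(x * Real.logb 2 x) - (1 - x) * Real.logb 2 (1 - x)

noncomputable def mutualInfo (τ ε q : ℝ) : ℝ :=
  binEntropy ((1 - q) * (τ - ε) + q * (τ + ε))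
    - (1 - q) * binEntropy (τ - ε) - q * binEntropy (τ + ε)

noncomputable def capacity (τ ε : ℝ) : ℝ :=
  sSup {y | ∃ q ∈ Set.Icc (0 : ℝ) 1, y = mutualInfo τ ε q}

lemma aux_binEntropy (x : ℝ) : binEntropy x = Real.binEntropy x / Real.log 2 := by
  rw [Real.binEntropy_eq_negMulLog_add_negMulLog_one_sub]
  simp only [binEntropy, Real.negMulLog, Real.logb]
  ring

lemma aux_log_one_sub {y : ℝ} (h0 : 0 < y) (h1 : y < 1 / 2) :
    -(y + y ^ 2 / 2 + y ^ 3 / 3 + 2 * y ^ 4) ≤ Real.log (1 - y) := by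
  have h := Real.abs_log_sub_add_sum_range_le (x := y) (by rw [abs_of_pos h0]; linarith) 3
  rw [abs_of_pos h0] at h
  have h2 := (abs_le.1 h).1
  simp only [Finset.sum_range_succ, Finset.sum_range_zero] at h2
  have h3 : y ^ (3 + 1) / (1 - y) ≤ 2 * y ^ 4 := by
    rw [div_le_iff₀ (by linarith)]
    have : 0 ≤ y ^ 4 * (1 / 2 - y) := mul_nonneg (by positivity) (by linarith)
    have e : y ^ (3 + 1) = y ^ 4 := rfl
    rw [e]
    linarith
  norm_num at h2 h3
  linarith

lemma aux_upper {y : ℝ} (h0 : 0 < y) (h1 : y < 1 / 2) :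
    (1 + y) * (Real.log (1 + y) - Real.log (1 - y)) ≤ 2 * y + 4 * y ^ 2 := by
  have ha := aux_log_one_sub h0 h1
  have hb := Real.log_le_sub_one_of_pos (show 0 < 1 + y by linarith)
  have hc : Real.log (1 + y) - Real.log (1 - y) ≤ 2 * y + 7 / 6 * y ^ 2 := by
    have : 0 ≤ y ^ 2 * (1 / 2 - y) := mul_nonneg (by positivity) (by linarith)
    have : 0 ≤ y ^ 3 * (1 / 2 - y) := mul_nonneg (by positivity) (by linarith)
    nlinarith
  have hd := mul_le_mul_of_nonneg_left hc (show 0 ≤ 1 + y by linarith)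
  have : 0 ≤ y ^ 2 * (1 / 2 - y) := mul_nonneg (by positivity) (by linarith)
  nlinarith [sq_nonneg y]

lemma aux_lower {x : ℝ} (h0 : 0 < x) (h1 : x < 1 / 2) :
    2 * x - 4 * x ^ 2 ≤ (1 - x) * (Real.log (1 + x) - Real.log (1 - x)) := by
  have ha := Real.log_le_sub_one_of_pos (show 0 < 1 - x by linarith)
  have hb := Real.le_log_one_add_of_nonneg h0.le
  have hc : x - x ^ 2 / 2 ≤ 2 * x / (x + 2) := by
    rw [le_div_iff₀ (by linarith)]
    have : 0 < x ^ 3 := by positivity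
    nlinarith
  have hd : 2 * x - x ^ 2 / 2 ≤ Real.log (1 + x) - Real.log (1 - x) := by linarith
  have he := mul_le_mul_of_nonneg_left hd (show 0 ≤ 1 - x by linarith)
  have : 0 < x ^ 3 := by positivity
  nlinarith [sq_nonneg x]

lemma aux_conv {x : ℝ} (h0 : 0 < x) (h1 : x < 1 / 2) :
    7 / 10 * x ^ 2 ≤ (1 + x) * Real.log (1 + x) + (1 - x) * Real.log (1 - x) := by
  have ha := aux_log_one_sub h0 h1
  have hb := Real.le_log_one_add_of_nonneg h0.le
  have h2 := mul_le_mul_of_nonneg_left ha (show 0 ≤ 1 - x by linarith)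
  have h3 := mul_le_mul_of_nonneg_left hb (show 0 ≤ 1 + x by linarith)
  have hc : 7 / 10 * x ^ 2 + (1 - x) * (x + x ^ 2 / 2 + x ^ 3 / 3 + 2 * x ^ 4)
      ≤ (1 + x) * (2 * x / (x + 2)) := by
    rw [← mul_div_assoc, le_div_iff₀ (by linarith)]
    have key : 0 ≤ x ^ 2 * (3/5 + 2/15 * x - 19/6 * x ^ 2 + 7/3 * x^3 + 2 * x ^ 4) := by
      apply mul_nonneg (by positivity)
      have : 0 < x ^ 4 := by positivity
      have e1 : 0 ≤ x * (x - 1/2)^2 := by positivity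
      nlinarith [sq_nonneg (x - 1/2)]
    nlinarith
  linarith

theorem good_query_loss_bound (τ ε q : ℝ)
    (hτ0 : 0 < τ) (hτ1 : τ < 1) (hε0 : 0 < ε) (hε : ε < (1/2) * min τ (1 - τ))
    (hq : q ∈ Set.Icc (0 : ℝ) 1)
    (hmax : ∀ x ∈ Set.Icc (0 : ℝ) 1, mutualInfo τ ε x ≤ mutualInfo τ ε q) :
    τ * Real.logb 2 ((τ + ε) / (τ + (2 * q - 1) * ε))
        + (1 - τ) * Real.logb 2 ((1 - τ - ε) / (1 - τ - (2 * q - 1) * ε)) ≥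
      capacity τ ε - 3 * ε ^ 2 / (τ * (1 - τ)) ∧
    capacity τ ε - 3 * ε ^ 2 / (τ * (1 - τ)) ≥ -5 * capacity τ ε := by
  have hcap : capacity τ ε = mutualInfo τ ε q := by
    apply IsGreatest.csSup_eq
    refine ⟨⟨q, hq, rfl⟩, ?_⟩
    rintro y ⟨x, hx, rfl⟩
    exact hmax x hx
  rw [hcap]
  have hε1 : ε < τ / 2 := by have := min_le_left τ (1 - τ); linarith
  have hε2 : ε < (1 - τ) / 2 := by have := min_le_right τ (1 - τ); linarith
  have hσ0 : 0 < 1 - τ := by linarith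
  have hl : 0 < Real.log 2 := Real.log_pos (by norm_num)
  have hl1 := Real.log_two_gt_d9
  have hl2 := Real.log_two_lt_d9
  obtain ⟨x, hx⟩ : ∃ x, x = ε / τ := ⟨_, rfl⟩
  obtain ⟨y, hy⟩ : ∃ y, y = ε / (1 - τ) := ⟨_, rfl⟩
  have hx0 : 0 < x := by rw [hx]; positivity
  have hy0 : 0 < y := by rw [hy]; positivity
  have hx1 : x < 1 / 2 := by rw [hx, div_lt_iff₀ hτ0]; linarith
  have hy1 : y < 1 / 2 := by rw [hy, div_lt_iff₀ hσ0]; linarith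
  have hxτ : τ * x = ε := by rw [hx]; field_simp
  have hyσ : (1 - τ) * y = ε := by rw [hy]; field_simp
  have hR : ε ^ 2 / (τ * (1 - τ)) = ε * (x + y) := by
    rw [hx, hy]; field_simp; ring
  have hR' : 3 * ε ^ 2 / (τ * (1 - τ)) = 3 * (ε * (x + y)) := by
    rw [← hR]; ring
  rw [hR']
  have la : Real.log (τ + ε) = Real.log τ + Real.log (1 + x) := by
    rw [← Real.log_mul (by positivity) (by positivity)]; congr 1; linarith
  have lb : Real.log (τ - ε) = Real.log τ + Real.log (1 - x) := by
    rw [← Real.log_mul (by positivity) (by linarith)]; congr 1; linarith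
  have la' : Real.log (1 - (τ + ε)) = Real.log (1 - τ) + Real.log (1 - y) := by
    rw [← Real.log_mul (by positivity) (by linarith)]; congr 1; linarith
  have lb' : Real.log (1 - (τ - ε)) = Real.log (1 - τ) + Real.log (1 + y) := by
    rw [← Real.log_mul (by positivity) (by positivity)]; congr 1; linarith
  have HE : ∀ z, Real.binEntropy z = -(z * Real.log z) - (1 - z) * Real.log (1 - z) := by
    intro z
    rw [Real.binEntropy_eq_negMulLog_add_negMulLog_one_sub]
    simp only [Real.negMulLog]; ring
  have hMI : ∀ z, mutualInfo τ ε z = (Real.binEntropy ((1 - z) * (τ - ε) + z * (τ + ε))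
      - (1 - z) * Real.binEntropy (τ - ε) - z * Real.binEntropy (τ + ε)) / Real.log 2 := by
    intro z
    simp only [mutualInfo, aux_binEntropy]; ring
  -- lower bound on the maximum
  have hhalf : 1 / 2 * (ε * (x + y)) ≤ mutualInfo τ ε (1 / 2) := by
    rw [hMI, le_div_iff₀ hl, show (1 - 1 / 2) * (τ - ε) + 1 / 2 * (τ + ε) = τ by ring,
      HE, HE, HE, la, lb, la', lb']
    have c1 := mul_le_mul_of_nonneg_left (aux_conv hx0 hx1) hτ0.le
    have c2 := mul_le_mul_of_nonneg_left (aux_conv hy0 hy1) hσ0.le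
    have e1 : τ * x ^ 2 = ε * x := by rw [← hxτ]; ring
    have e2 : (1 - τ) * y ^ 2 = ε * y := by rw [← hyσ]; ring
    have c3 : 7 / 10 * (ε * (x + y)) ≤
        τ * ((1 + x) * Real.log (1 + x) + (1 - x) * Real.log (1 - x)) +
        (1 - τ) * ((1 + y) * Real.log (1 + y) + (1 - y) * Real.log (1 - y)) := by
      linarith
    have c4 : ε * (x + y) * Real.log 2 ≤ ε * (x + y) * (7 / 10) :=
      mul_le_mul_of_nonneg_left (by linarith) (by positivity)
    have c5 : τ * ((1 + x) * Real.log (1 + x) + (1 - x) * Real.log (1 - x)) +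
        (1 - τ) * ((1 + y) * Real.log (1 + y) + (1 - y) * Real.log (1 - y)) =
        (τ + ε) * Real.log (1 + x) + (τ - ε) * Real.log (1 - x) +
        (1 - (τ - ε)) * Real.log (1 + y) + (1 - (τ + ε)) * Real.log (1 - y) := by
      linear_combination (Real.log (1 + x) - Real.log (1 - x)) * hxτ +
        (Real.log (1 + y) - Real.log (1 - y)) * hyσ
    rw [c5] at c3
    linarith
  have hC := hmax (1 / 2) (by constructor <;> norm_num)
  have hpos : 0 < ε * (x + y) := by positivity
  refine ⟨?_, by linarith⟩
  have hq0 : 0 < q := by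
    rcases hq.1.eq_or_lt with h | h
    · exfalso
      have : mutualInfo τ ε q = 0 := by rw [← h]; simp [mutualInfo]
      linarith
    · exact h
  have hq1 : q < 1 := by
    rcases hq.2.eq_or_lt with h | h
    · exfalso
      have : mutualInfo τ ε q = 0 := by rw [h]; simp [mutualInfo]
      linarith
    · exact h
  obtain ⟨m, hm⟩ : ∃ m, m = (1 - q) * (τ - ε) + q * (τ + ε) := ⟨_, rfl⟩
  have hm0 : 0 < m := by rw [hm]; nlinarith
  have hm1 : m < 1 := by rw [hm]; nlinarith
  have hstat : 2 * ε * (Real.log (1 - m) - Real.log m)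
      + Real.binEntropy (τ - ε) - Real.binEntropy (τ + ε) = 0 := by
    have hloc : IsLocalMax (mutualInfo τ ε) q := by
      filter_upwards [Icc_mem_nhds hq0 hq1] with z hz using hmax z hz
    have hd : HasDerivAt (mutualInfo τ ε) ((2 * ε * (Real.log (1 - m) - Real.log m)
      + Real.binEntropy (τ - ε) - Real.binEntropy (τ + ε)) / Real.log 2) q := by
      rw [funext hMI]
      have i1 : HasDerivAt (fun z : ℝ => (1 - z) * (τ - ε) + z * (τ + ε)) (2 * ε) q := by
        have := (((hasDerivAt_id q).const_sub 1).mul_const (τ - ε)).add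
          ((hasDerivAt_id q).mul_const (τ + ε))
        exact this.congr_deriv (by ring)
      have i2 := Real.hasDerivAt_binEntropy hm0.ne' hm1.ne
      rw [hm] at i2
      have i3 := HasDerivAt.comp q i2 i1
      have i4 := ((i3.sub (((hasDerivAt_id q).const_sub 1).mul_const (Real.binEntropy (τ - ε)))).sub
        ((hasDerivAt_id q).mul_const (Real.binEntropy (τ + ε)))).div_const (Real.log 2)
      exact i4.congr_deriv (by rw [hm]; ring)
    have := hloc.hasDerivAt_eq_zero hd
    rcases div_eq_zero_iff.1 this with h | h
    · exact h
    · exact absurd h hl.ne'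
  have hm' : τ + (2 * q - 1) * ε = m := by rw [hm]; ring
  have hm'' : 1 - τ - (2 * q - 1) * ε = 1 - m := by rw [hm]; ring
  have ha'' : 1 - τ - ε = 1 - (τ + ε) := by ring
  rw [hm', hm'', ha'', hMI, ← hm]
  simp only [Real.logb]
  rw [Real.log_div (by positivity) hm0.ne', Real.log_div (by linarith) (by linarith)]
  have hD : 2 * ((Real.log (τ + ε) - Real.log m) - (Real.log (1 - (τ + ε)) - Real.log (1 - m)))
      ≤ 4 * (x + y) := by
    have u1 := mul_le_mul_of_nonneg_left (aux_upper hy0 hy1) hσ0.le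
    have u2 := mul_le_mul_of_nonneg_left (aux_lower hx0 hx1) hτ0.le
    have e1 : τ * x ^ 2 = ε * x := by rw [← hxτ]; ring
    have e2 : (1 - τ) * y ^ 2 = ε * y := by rw [← hyσ]; ring
    rw [HE, HE] at hstat
    refine le_of_mul_le_mul_left ?_ hε0
    rw [la, la', lb, lb'] at hstat
    rw [la, la']
    have e3 : ε * (2 * ((Real.log τ + Real.log (1 + x) - Real.log m) -
        (Real.log (1 - τ) + Real.log (1 - y) - Real.log (1 - m)))) =
        (1 - τ) * ((1 + y) * (Real.log (1 + y) - Real.log (1 - y))) -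
        τ * ((1 - x) * (Real.log (1 + x) - Real.log (1 - x))) := by
      linear_combination hstat - (Real.log (1 + x) - Real.log (1 - x)) * hxτ -
        (Real.log (1 + y) - Real.log (1 - y)) * hyσ
    rw [e3]
    linarith
  have hCa : Real.binEntropy m - (1 - q) * Real.binEntropy (τ - ε) - q * Real.binEntropy (τ + ε)
      = (τ + ε) * (Real.log (τ + ε) - Real.log m)
        + (1 - (τ + ε)) * (Real.log (1 - (τ + ε)) - Real.log (1 - m)) := by
    have h1 := HE m
    have h2 := HE (τ + ε)
    linear_combination h1 - h2 - (1 - q) * hstat + (Real.log (1 - m) - Real.log m) * hm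
  rw [hCa, ge_iff_le, sub_le_iff_le_add, div_le_iff₀ hl]
  have f1 := mul_le_mul_of_nonneg_left hD hε0.le
  have f2 : ε * (x + y) * (2 / 3) ≤ ε * (x + y) * Real.log 2 :=
    mul_le_mul_of_nonneg_left (by linarith) hpos.le
  have f3 : ∀ A B : ℝ, (τ * (A / Real.log 2) + (1 - τ) * (B / Real.log 2)
      + 3 * (ε * (x + y))) * Real.log 2 = τ * A + (1 - τ) * B + 3 * (ε * (x + y) * Real.log 2) := by
    intro A B; field_simp
  rw [f3]
  linarith
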